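/- arXiv:2001.02753 — 2 statements merged into one kernel-verified Lean document; each statement's English description precedes it below -/
import Mathlib

section
/- Let B ∈ C²(ℝ², ℝ^{2×2}) be a 2×2 real symmetric matrix-valued function, r ∈ ℝ² a point where J_r(B) is invertible, and U ∈ ℝ^{2×2} a constant orthogonal matrix. Then the one-step iteration map satisfies σ(B, r) = σ(UᵀBU, r), i.e. r − J_r(B)⁻¹F(B)(r) = r − J_r(UᵀBU)⁻¹F(UᵀBU)(r). -/
noncomputable section
open Matrix

/-- Partial derivative in the `x` direction. -/
def pdx {E : Type*} [NormedAddCommGroup E] [NormedSpace ℝ E] (f : ℝ × ℝ → E) (r : ℝ × ℝ) : E :=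
  fderiv ℝ f r (1, 0)

/-- Partial derivative in the `y` direction. -/
def pdy {E : Type*} [NormedAddCommGroup E] [NormedSpace ℝ E] (f : ℝ × ℝ → E) (r : ℝ × ℝ) : E :=
  fderiv ℝ f r (0, 1)

/-- The target function `F(S) = (S₁₁ − S₂₂, 2 S₁₂)` of a 2×2 matrix family. -/
def Ftar (S : ℝ × ℝ → Matrix (Fin 2) (Fin 2) ℝ) (r : ℝ × ℝ) : ℝ × ℝ :=
  (S r 0 0 - S r 1 1, 2 * S r 0 1)

/-- The Jacobian `J_r(S) = D_r F(S)` of the target function. -/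
def Jmat (S : ℝ × ℝ → Matrix (Fin 2) (Fin 2) ℝ) (r : ℝ × ℝ) : Matrix (Fin 2) (Fin 2) ℝ :=
  !![pdx (fun p => S p 0 0 - S p 1 1) r, pdy (fun p => S p 0 0 - S p 1 1) r;
     pdx (fun p => 2 * S p 0 1) r, pdy (fun p => 2 * S p 0 1) r]

/-- Action of a 2×2 matrix on `ℝ × ℝ`. -/
def mulVec2 (M : Matrix (Fin 2) (Fin 2) ℝ) (v : ℝ × ℝ) : ℝ × ℝ :=
  (M 0 0 * v.1 + M 0 1 * v.2, M 1 0 * v.1 + M 1 1 * v.2)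

/-- The family `A` expressed in the constant basis `v₁, v₂`:
the 2×2 matrix `Ã(r) = (⟨vᵢ, A(r) vⱼ⟩)`. -/
def tildeA {n : ℕ} (A : ℝ × ℝ → Matrix (Fin n) (Fin n) ℝ) (v₁ v₂ : Fin n → ℝ) :
    ℝ × ℝ → Matrix (Fin 2) (Fin 2) ℝ := fun r =>
  !![v₁ ⬝ᵥ (A r).mulVec v₁, v₁ ⬝ᵥ (A r).mulVec v₂;
     v₂ ⬝ᵥ (A r).mulVec v₁, v₂ ⬝ᵥ (A r).mulVec v₂]

/-- The discriminant of a 2×2 symmetric matrix family. -/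
def discB (B : ℝ × ℝ → Matrix (Fin 2) (Fin 2) ℝ) (r : ℝ × ℝ) : ℝ :=
  (B r 0 0 - B r 1 1) ^ 2 + 4 * (B r 0 1) ^ 2

/-- The Hessian (matrix of second partial derivatives) of `g : ℝ² → ℝ`. -/
def Hess2 (g : ℝ × ℝ → ℝ) (α : ℝ × ℝ) : Matrix (Fin 2) (Fin 2) ℝ :=
  !![pdx (fun r => pdx g r) α, pdx (fun r => pdy g r) α;
     pdy (fun r => pdx g r) α, pdy (fun r => pdy g r) α]

/-- The upper-left 2×2 block of an `n×n` matrix family (`2 < n`). -/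
def topBlock {n : ℕ} (hn : 2 < n) (C : ℝ × ℝ → Matrix (Fin n) (Fin n) ℝ) :
    ℝ × ℝ → Matrix (Fin 2) (Fin 2) ℝ := fun r =>
  !![C r ⟨0, by omega⟩ ⟨0, by omega⟩, C r ⟨0, by omega⟩ ⟨1, by omega⟩;
     C r ⟨1, by omega⟩ ⟨0, by omega⟩, C r ⟨1, by omega⟩ ⟨1, by omega⟩]

/-- The linear map induced on `F(S)` by the change of basis `S ↦ Uᵀ S U`. -/
def targetRotation (U : Matrix (Fin 2) (Fin 2) ℝ) : Matrix (Fin 2) (Fin 2) ℝ :=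
  !![U 0 0 ^ 2 - U 0 1 ^ 2, U 0 0 * U 1 0 - U 0 1 * U 1 1;
     2 * (U 0 0 * U 0 1), U 0 0 * U 1 1 + U 0 1 * U 1 0]

theorem det_targetRotation (U : Matrix (Fin 2) (Fin 2) ℝ) :
    (targetRotation U).det = (U 0 0 ^ 2 + U 0 1 ^ 2) * U.det := by
  simp only [targetRotation, det_fin_two, of_apply, cons_val', cons_val_zero, cons_val_one,
    cons_val_fin_one]
  ring

theorem isUnit_det_targetRotation {U : Matrix (Fin 2) (Fin 2) ℝ} (hU : Uᵀ * U = 1) :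
    IsUnit (targetRotation U).det := by
  have hU' : U * Uᵀ = 1 := mul_eq_one_comm.mp hU
  have hrow := congrFun (congrFun hU' 0) 0
  simp only [mul_apply, Fin.sum_univ_two, transpose_apply, one_apply_eq] at hrow
  rw [det_targetRotation, show U 0 0 ^ 2 + U 0 1 ^ 2 = 1 by linarith, one_mul]
  exact isUnit_det_of_left_inverse hU

theorem mulVec2_mul (M N : Matrix (Fin 2) (Fin 2) ℝ) (v : ℝ × ℝ) :
    mulVec2 (M * N) v = mulVec2 M (mulVec2 N v) := by
  ext <;> simp only [mulVec2, mul_apply, Fin.sum_univ_two] <;> ring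

theorem Ftar_conj (S : ℝ × ℝ → Matrix (Fin 2) (Fin 2) ℝ) (p : ℝ × ℝ) (hS : (S p)ᵀ = S p)
    {U : Matrix (Fin 2) (Fin 2) ℝ} (hU : Uᵀ * U = 1) :
    Ftar (fun q => Uᵀ * S q * U) p = mulVec2 (targetRotation U) (Ftar S p) := by
  have hs : S p 1 0 = S p 0 1 := congrFun (congrFun hS 0) 1
  ext
  · simp only [Ftar, mulVec2, targetRotation, mul_apply, Fin.sum_univ_two, transpose_apply, hs,
      of_apply, cons_val', cons_val_zero, cons_val_one, cons_val_fin_one]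
    have hcol := congrFun (congrFun hU 0) 0
    have hcol' := congrFun (congrFun hU 1) 1
    simp only [mul_apply, Fin.sum_univ_two, transpose_apply, one_apply_eq] at hcol hcol'
    linear_combination (hcol - hcol') * S p 1 1
  · simp only [Ftar, mulVec2, targetRotation, mul_apply, Fin.sum_univ_two, transpose_apply, hs,
      of_apply, cons_val', cons_val_zero, cons_val_one, cons_val_fin_one]
    have hcol := congrFun (congrFun hU 0) 1
    simp only [mul_apply, Fin.sum_univ_two, transpose_apply,
      one_apply_ne (show (0 : Fin 2) ≠ 1 by decide)] at hcol
    linear_combination 2 * S p 1 1 * hcol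

theorem fderiv_linear_combination_apply {f g : ℝ × ℝ → ℝ} {r : ℝ × ℝ}
    (hf : DifferentiableAt ℝ f r) (hg : DifferentiableAt ℝ g r) (a b : ℝ) (v : ℝ × ℝ) :
    fderiv ℝ (fun p => a * f p + b * g p) r v = a * fderiv ℝ f r v + b * fderiv ℝ g r v := by
  rw [fderiv_fun_add (hf.const_mul a) (hg.const_mul b), fderiv_const_mul hf, fderiv_const_mul hg]
  simp

theorem Jmat_eq_mul {S T : ℝ × ℝ → Matrix (Fin 2) (Fin 2) ℝ} {r : ℝ × ℝ}
    (hS : ∀ i j, DifferentiableAt ℝ (fun p => S p i j) r) (R : Matrix (Fin 2) (Fin 2) ℝ)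
    (hT : ∀ p, Ftar T p = mulVec2 R (Ftar S p)) :
    Jmat T r = R * Jmat S r := by
  have h₁ : (fun p => T p 0 0 - T p 1 1) =
      fun p => R 0 0 * (S p 0 0 - S p 1 1) + R 0 1 * (2 * S p 0 1) :=
    funext fun p => congrArg Prod.fst (hT p)
  have h₂ : (fun p => 2 * T p 0 1) =
      fun p => R 1 0 * (S p 0 0 - S p 1 1) + R 1 1 * (2 * S p 0 1) :=
    funext fun p => congrArg Prod.snd (hT p)
  have hf : DifferentiableAt ℝ (fun p => S p 0 0 - S p 1 1) r := (hS 0 0).sub (hS 1 1)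
  have hg : DifferentiableAt ℝ (fun p => 2 * S p 0 1) r := (hS 0 1).const_mul 2
  ext i j
  fin_cases i <;> fin_cases j <;>
    simp [Jmat, pdx, pdy, h₁, h₂, fderiv_linear_combination_apply hf hg, mul_apply,
      Fin.sum_univ_two]

/-- Lemma 4 of the paper: invariance of the one-step Newton
iteration map `σ` under a constant orthogonal change of basis. -/
theorem stmt5 (B : ℝ × ℝ → Matrix (Fin 2) (Fin 2) ℝ)
    (hB : ∀ i j, ContDiff ℝ 2 fun r => B r i j)
    (hBsym : ∀ r, (B r)ᵀ = B r)
    (r : ℝ × ℝ) (hJ : (Jmat B r).det ≠ 0)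
    (U : Matrix (Fin 2) (Fin 2) ℝ) (hU : Uᵀ * U = 1) :
    r - mulVec2 (Jmat B r)⁻¹ (Ftar B r) =
      r - mulVec2 (Jmat (fun p => Uᵀ * B p * U) r)⁻¹ (Ftar (fun p => Uᵀ * B p * U) r) := by
  have hF := fun p => Ftar_conj B p (hBsym p) hU
  have hdiff : ∀ i j, DifferentiableAt ℝ (fun p => B p i j) r := fun i j =>
    (hB i j).differentiable (by norm_num) r
  rw [Jmat_eq_mul hdiff (targetRotation U) hF, hF, ← mulVec2_mul, Matrix.mul_inv_rev,
    Matrix.mul_assoc, nonsing_inv_mul _ (isUnit_det_targetRotation hU), Matrix.mul_one]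
end
end

section
/- Let A : ℝ² → ℝ^{n×n} be a C² family of real symmetric matrices with a non-degenerate conical point at α between λ₁ and λ₂, and let B^r denote the 2×2 block of the diagonalized-at-r block decomposition Γ(r')ᵀA^r(r')Γ(r') = B^r(r') ⊕ Λ(r') near α. Then there is a neighborhood of α and a constant c > 0 on which both J_r(B^r) and J_r(Ã^r) are invertible and ‖J_r(B^r)⁻¹ − J_r(Ã^r)⁻¹‖ ≤ c |λ₂(r) − λ₁(r)|, where the Jacobians are evaluated at the same point r at which both B^r and Ã^r are diagonal. -/
noncomputable section
open Matrix

open Filter Topology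

/-- The action of the congruence `S ↦ Wᵀ S W` by an orthogonal `W` on `(S₁₁ - S₂₂, 2 S₁₂)`. -/
def conjAct (W : Matrix (Fin 2) (Fin 2) ℝ) : Matrix (Fin 2) (Fin 2) ℝ :=
  !![W 0 0 ^ 2 - W 0 1 ^ 2, W 0 0 * W 1 0 - W 0 1 * W 1 1;
     2 * (W 0 0 * W 0 1), W 0 0 * W 1 1 + W 0 1 * W 1 0]

theorem orthogonal_fin_two_eqs {W : Matrix (Fin 2) (Fin 2) ℝ} (hW : Wᵀ * W = 1) :
    W 0 0 ^ 2 + W 1 0 ^ 2 = 1 ∧ W 0 1 ^ 2 + W 1 1 ^ 2 = 1 ∧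
      W 0 0 * W 0 1 + W 1 0 * W 1 1 = 0 := by
  have h (i j : Fin 2) := congrFun (congrFun hW i) j
  have h00 := h 0 0
  have h11 := h 1 1
  have h01 := h 0 1
  simp [Matrix.mul_apply, Fin.sum_univ_two] at h00 h11 h01
  exact ⟨by linarith, by linarith, by linarith⟩

theorem orthogonal_fin_two_row_eqs {W : Matrix (Fin 2) (Fin 2) ℝ} (hW : Wᵀ * W = 1) :
    W 0 0 ^ 2 + W 0 1 ^ 2 = 1 ∧ W 1 0 ^ 2 + W 1 1 ^ 2 = 1 ∧
      W 0 0 * W 1 0 + W 0 1 * W 1 1 = 0 :=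
  orthogonal_fin_two_eqs (W := Wᵀ) (by simpa using mul_eq_one_comm.mp hW)

theorem conjAct_transpose_mul {W : Matrix (Fin 2) (Fin 2) ℝ} (hW : Wᵀ * W = 1) :
    conjAct W * conjAct Wᵀ = 1 := by
  obtain ⟨h1, h2, h3⟩ := orthogonal_fin_two_eqs hW
  obtain ⟨k1, k2, k3⟩ := orthogonal_fin_two_row_eqs hW
  ext i j
  fin_cases i <;> fin_cases j <;>
    simp [conjAct, Matrix.mul_apply, Fin.sum_univ_two] <;> grind

theorem conjAct_det_sq {W : Matrix (Fin 2) (Fin 2) ℝ} (hW : Wᵀ * W = 1) :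
    (conjAct W).det ^ 2 = 1 := by
  obtain ⟨h1, h2, h3⟩ := orthogonal_fin_two_eqs hW
  obtain ⟨k1, k2, k3⟩ := orthogonal_fin_two_row_eqs hW
  simp [conjAct, Matrix.det_fin_two]
  grind

theorem abs_conjAct_le {W : Matrix (Fin 2) (Fin 2) ℝ} (hW : Wᵀ * W = 1) (i j : Fin 2) :
    |conjAct W i j| ≤ 2 := by
  obtain ⟨h1, h2, h3⟩ := orthogonal_fin_two_eqs hW
  rw [abs_le]
  fin_cases i <;> fin_cases j <;> simp [conjAct] <;> constructor <;>
    nlinarith [sq_nonneg (W 0 0 - W 0 1), sq_nonneg (W 0 0 + W 0 1), sq_nonneg (W 0 0 - W 1 0),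
      sq_nonneg (W 0 0 + W 1 0), sq_nonneg (W 0 1 - W 1 1), sq_nonneg (W 0 1 + W 1 1),
      sq_nonneg (W 0 0 - W 1 1), sq_nonneg (W 0 0 + W 1 1), sq_nonneg (W 0 1 - W 1 0),
      sq_nonneg (W 0 1 + W 1 0), sq_nonneg (W 0 0), sq_nonneg (W 0 1), sq_nonneg (W 1 0),
      sq_nonneg (W 1 1)]

/-- Jacobians of orthogonally congruent symmetric families differ by `conjAct W`. -/
theorem Jmat_conj {W : Matrix (Fin 2) (Fin 2) ℝ} (hW : Wᵀ * W = 1)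
    {S : ℝ × ℝ → Matrix (Fin 2) (Fin 2) ℝ} {r : ℝ × ℝ}
    (hS : ∀ i j, DifferentiableAt ℝ (fun p => S p i j) r)
    (hsym : ∀ᶠ p in 𝓝 r, S p 1 0 = S p 0 1) :
    Jmat (fun p => Wᵀ * S p * W) r = conjAct W * Jmat S r := by
  obtain ⟨h1, h2, h3⟩ := orthogonal_fin_two_eqs hW
  obtain ⟨k1, k2, k3⟩ := orthogonal_fin_two_row_eqs hW
  have hf : DifferentiableAt ℝ (fun p => S p 0 0 - S p 1 1) r := (hS 0 0).sub (hS 1 1)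
  have hg : DifferentiableAt ℝ (fun p => 2 * S p 0 1) r := (hS 0 1).const_mul 2
  have e1 : (fun p => (Wᵀ * S p * W) 0 0 - (Wᵀ * S p * W) 1 1) =ᶠ[𝓝 r]
      fun p => (conjAct W 0 0) * (S p 0 0 - S p 1 1) + (conjAct W 0 1) * (2 * S p 0 1) := by
    filter_upwards [hsym] with p hp
    simp [conjAct, Matrix.mul_apply, Fin.sum_univ_two, hp]
    grind
  have e2 : (fun p => 2 * (Wᵀ * S p * W) 0 1) =ᶠ[𝓝 r]
      fun p => (conjAct W 1 0) * (S p 0 0 - S p 1 1) + (conjAct W 1 1) * (2 * S p 0 1) := by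
    filter_upwards [hsym] with p hp
    simp [conjAct, Matrix.mul_apply, Fin.sum_univ_two, hp]
    grind
  have d (a b : ℝ) : fderiv ℝ (fun p => a * (S p 0 0 - S p 1 1) + b * (2 * S p 0 1)) r =
      a • fderiv ℝ (fun p => S p 0 0 - S p 1 1) r + b • fderiv ℝ (fun p => 2 * S p 0 1) r :=
    ((hf.hasFDerivAt.const_mul a).add (hg.hasFDerivAt.const_mul b)).fderiv
  simp only [Jmat, pdx, pdy, e1.fderiv_eq, e2.fderiv_eq, d]
  ext i j
  fin_cases i <;> fin_cases j <;> simp [Matrix.mul_apply, Fin.sum_univ_two]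

theorem hasFDerivAt_dotProduct_mulVec {n : ℕ} {u v : ℝ × ℝ → Fin n → ℝ}
    {A : ℝ × ℝ → Matrix (Fin n) (Fin n) ℝ} {r : ℝ × ℝ}
    (hu : ∀ i, DifferentiableAt ℝ (fun p => u p i) r)
    (hv : ∀ i, DifferentiableAt ℝ (fun p => v p i) r)
    (hA : ∀ i j, DifferentiableAt ℝ (fun p => A p i j) r) :
    DifferentiableAt ℝ (fun p => u p ⬝ᵥ (A p).mulVec (v p)) r ∧
    ∀ e, fderiv ℝ (fun p => u p ⬝ᵥ (A p).mulVec (v p)) r e =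
      (fun i => fderiv ℝ (fun p => u p i) r e) ⬝ᵥ (A r).mulVec (v r) +
      u r ⬝ᵥ (Matrix.of fun i j => fderiv ℝ (fun p => A p i j) r e).mulVec (v r) +
      u r ⬝ᵥ (A r).mulVec (fun i => fderiv ℝ (fun p => v p i) r e) := by
  have H := HasFDerivAt.fun_sum (u := Finset.univ) fun i _ => (hu i).hasFDerivAt.mul
    (HasFDerivAt.fun_sum (u := Finset.univ)
      fun j _ => (hA i j).hasFDerivAt.fun_mul (hv j).hasFDerivAt)
  have H' : HasFDerivAt (fun p => u p ⬝ᵥ (A p).mulVec (v p)) _ r := H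
  refine ⟨H'.differentiableAt, fun e => ?_⟩
  rw [H'.fderiv]
  simp only [dotProduct, mulVec, Matrix.of_apply, ← Finset.sum_add_distrib, Finset.mul_sum,
    _root_.sum_apply, _root_.add_apply, _root_.smul_apply, smul_eq_mul, Finset.sum_mul]
  refine Finset.sum_congr rfl fun i _ => ?_
  refine Finset.sum_congr rfl fun j _ => ?_
  ring

theorem dotProduct_mulVec_symm {n : ℕ} {A : Matrix (Fin n) (Fin n) ℝ} (hA : Aᵀ = A)
    (u v : Fin n → ℝ) : u ⬝ᵥ A.mulVec v = v ⬝ᵥ A.mulVec u := by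
  rw [dotProduct_mulVec, ← mulVec_transpose, hA, dotProduct_comm]

/-- Changing the basis of `tildeA` by `W` is a congruence. -/
theorem tildeA_combination {n : ℕ} (A : ℝ × ℝ → Matrix (Fin n) (Fin n) ℝ)
    (c₁ c₂ : Fin n → ℝ) (W : Matrix (Fin 2) (Fin 2) ℝ) :
    tildeA A (W 0 0 • c₁ + W 1 0 • c₂) (W 0 1 • c₁ + W 1 1 • c₂) =
      fun p => Wᵀ * tildeA A c₁ c₂ p * W := by
  funext p
  ext i j
  fin_cases i <;> fin_cases j <;>
    simp [tildeA, Matrix.mul_apply, Fin.sum_univ_two, mulVec_add, mulVec_smul] <;> ring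

theorem tildeA_differentiableAt {n : ℕ} {A : ℝ × ℝ → Matrix (Fin n) (Fin n) ℝ} {r : ℝ × ℝ}
    (hA : ∀ i j, DifferentiableAt ℝ (fun p => A p i j) r) (c₁ c₂ : Fin n → ℝ) (i j : Fin 2) :
    DifferentiableAt ℝ (fun p => tildeA A c₁ c₂ p i j) r := by
  have h (u v : Fin n → ℝ) : DifferentiableAt ℝ (fun p => u ⬝ᵥ (A p).mulVec v) r :=
    (hasFDerivAt_dotProduct_mulVec (u := fun _ => u) (v := fun _ => v) (by simp) (by simp) hA).1
  fin_cases i <;> fin_cases j <;> simpa [tildeA] using h _ _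

theorem Jmat_tildeA_combination {n : ℕ} {A : ℝ × ℝ → Matrix (Fin n) (Fin n) ℝ} {r : ℝ × ℝ}
    (hA : ∀ i j, DifferentiableAt ℝ (fun p => A p i j) r) (hAsym : ∀ p, (A p)ᵀ = A p)
    (c₁ c₂ : Fin n → ℝ) {W : Matrix (Fin 2) (Fin 2) ℝ} (hW : Wᵀ * W = 1) :
    Jmat (tildeA A (W 0 0 • c₁ + W 1 0 • c₂) (W 0 1 • c₁ + W 1 1 • c₂)) r =
      conjAct W * Jmat (tildeA A c₁ c₂) r := by
  rw [tildeA_combination]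
  refine Jmat_conj hW (tildeA_differentiableAt hA c₁ c₂) (.of_forall fun p => ?_)
  simpa [tildeA] using dotProduct_mulVec_symm (hAsym p) _ _

/-- An eigenvector for a double lowest eigenvalue is a combination of the first two columns
of a diagonalizing orthogonal matrix. -/
theorem eigenvector_eq_combination {n : ℕ} (hn : 2 < n) {A V : Matrix (Fin n) (Fin n) ℝ}
    {l : Fin n → ℝ} (hl : Monotone l) (hV : Vᵀ * V = 1) (hAV : A = V * diagonal l * Vᵀ)
    (hdeg : l ⟨0, by omega⟩ = l ⟨1, by omega⟩) (hgap : l ⟨1, by omega⟩ < l ⟨2, by omega⟩)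
    {u : Fin n → ℝ} (hu : A.mulVec u = l ⟨0, by omega⟩ • u) :
    u = (Vᵀ.mulVec u) ⟨0, by omega⟩ • V.col ⟨0, by omega⟩ +
      (Vᵀ.mulVec u) ⟨1, by omega⟩ • V.col ⟨1, by omega⟩ := by
  have hV' : V * Vᵀ = 1 := mul_eq_one_comm.mp hV
  have hx : (diagonal l).mulVec (Vᵀ.mulVec u) = l ⟨0, by omega⟩ • Vᵀ.mulVec u := by
    have := congrArg Vᵀ.mulVec hu
    rw [hAV, mulVec_smul, mulVec_mulVec, ← mul_assoc, ← mul_assoc, hV, one_mul,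
      ← mulVec_mulVec] at this
    exact this
  have hzero (i : Fin n) (hi : 2 ≤ i.val) : (Vᵀ.mulVec u) i = 0 := by
    have h := congrFun hx i
    have hli : l ⟨2, by omega⟩ ≤ l i := hl (by simpa [Fin.le_def] using hi)
    simp only [mulVec_diagonal, Pi.smul_apply, smul_eq_mul] at h
    have : l i - l ⟨0, by omega⟩ ≠ 0 := by rw [hdeg]; linarith
    exact (mul_eq_zero.mp (by linear_combination h :
      (l i - l ⟨0, by omega⟩) * (Vᵀ.mulVec u) i = 0)).resolve_left this
  have h0 : V.mulVec (Vᵀ.mulVec u) = u := by rw [mulVec_mulVec, hV', one_mulVec]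
  conv_lhs => rw [← h0]
  funext i
  simp only [mulVec, dotProduct] at hzero ⊢
  rw [Fintype.sum_eq_add (⟨0, by omega⟩ : Fin n) ⟨1, by omega⟩ (by simp)]
  · simp [mul_comm]
  · rintro x ⟨hx0, hx1⟩
    rw [hzero x, mul_zero]
    simp only [ne_eq, Fin.ext_iff] at hx0 hx1
    omega

/-- At a double lowest eigenvalue, the squared Jacobian determinant of `tildeA` does not depend on
the orthonormal basis of the eigenspace. -/
theorem Jmat_tildeA_det_sq {n : ℕ} (hn : 2 < n) {A : ℝ × ℝ → Matrix (Fin n) (Fin n) ℝ}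
    {α : ℝ × ℝ} (hA : ∀ i j, DifferentiableAt ℝ (fun p => A p i j) α)
    (hAsym : ∀ p, (A p)ᵀ = A p) {V : Matrix (Fin n) (Fin n) ℝ}
    {l : Fin n → ℝ} (hl : Monotone l) (hV : Vᵀ * V = 1) (hAV : A α = V * diagonal l * Vᵀ)
    (hdeg : l ⟨0, by omega⟩ = l ⟨1, by omega⟩) (hgap : l ⟨1, by omega⟩ < l ⟨2, by omega⟩)
    {u₁ u₂ : Fin n → ℝ} (hu₁ : (A α).mulVec u₁ = l ⟨0, by omega⟩ • u₁)
    (hu₂ : (A α).mulVec u₂ = l ⟨0, by omega⟩ • u₂)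
    (h₁₁ : u₁ ⬝ᵥ u₁ = 1) (h₂₂ : u₂ ⬝ᵥ u₂ = 1) (h₁₂ : u₁ ⬝ᵥ u₂ = 0) :
    (Jmat (tildeA A u₁ u₂) α).det ^ 2 =
      (Jmat (tildeA A (V.col ⟨0, by omega⟩) (V.col ⟨1, by omega⟩)) α).det ^ 2 := by
  have e₁ := eigenvector_eq_combination hn hl hV hAV hdeg hgap hu₁
  have e₂ := eigenvector_eq_combination hn hl hV hAV hdeg hgap hu₂
  set c₁ := V.col ⟨0, by omega⟩ with hc₁
  set c₂ := V.col ⟨1, by omega⟩ with hc₂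
  generalize (Vᵀ.mulVec u₁) ⟨0, by omega⟩ = a at e₁
  generalize (Vᵀ.mulVec u₁) ⟨1, by omega⟩ = b at e₁
  generalize (Vᵀ.mulVec u₂) ⟨0, by omega⟩ = c at e₂
  generalize (Vᵀ.mulVec u₂) ⟨1, by omega⟩ = d at e₂
  have hc (i j : Fin n) : V.col i ⬝ᵥ V.col j = (1 : Matrix (Fin n) (Fin n) ℝ) i j := by
    rw [← hV]; rfl
  have g₁₁ : c₁ ⬝ᵥ c₁ = 1 := by simp [hc₁, hc]
  have g₂₂ : c₂ ⬝ᵥ c₂ = 1 := by simp [hc₂, hc]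
  have g₁₂ : c₁ ⬝ᵥ c₂ = 0 := by simp [hc₁, hc₂, hc]
  have g₂₁ : c₂ ⬝ᵥ c₁ = 0 := by simp [hc₁, hc₂, hc]
  have hW : (!![a, c; b, d])ᵀ * !![a, c; b, d] = 1 := by
    simp only [e₁, e₂, add_dotProduct, dotProduct_add, smul_dotProduct, dotProduct_smul, g₁₁, g₂₂,
      g₁₂, g₂₁, smul_eq_mul] at h₁₁ h₂₂ h₁₂
    ext i j
    fin_cases i <;> fin_cases j <;> simp [Matrix.mul_apply, Fin.sum_univ_two] <;> linarith
  have := Jmat_tildeA_combination hA hAsym c₁ c₂ hW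
  simp only [of_apply, cons_val', cons_val_zero, cons_val_one, cons_val_fin_one] at this
  rw [e₁, e₂, this, det_mul, mul_pow, conjAct_det_sq hW, one_mul]

/-- In an orthonormal moving frame spanning an invariant plane, with `A mⱼ = ∑ Bₖⱼ mₖ`, the Jacobian
of the block `B` and that of `A` in the frozen frame differ by a multiple of the connection form. -/
theorem fderiv_block_sub_fderiv_frozen {n : ℕ} {A : ℝ × ℝ → Matrix (Fin n) (Fin n) ℝ}
    {r : ℝ × ℝ} {m₁ m₂ : ℝ × ℝ → Fin n → ℝ}
    (hA : ∀ i j, DifferentiableAt ℝ (fun p => A p i j) r) (hAsym : (A r)ᵀ = A r)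
    (hm₁ : ∀ i, DifferentiableAt ℝ (fun p => m₁ p i) r)
    (hm₂ : ∀ i, DifferentiableAt ℝ (fun p => m₂ p i) r)
    (h₁₁ : ∀ᶠ p in 𝓝 r, m₁ p ⬝ᵥ m₁ p = 1) (h₂₂ : ∀ᶠ p in 𝓝 r, m₂ p ⬝ᵥ m₂ p = 1)
    (h₁₂ : ∀ᶠ p in 𝓝 r, m₁ p ⬝ᵥ m₂ p = 0) {a b d : ℝ}
    (hAm₁ : (A r).mulVec (m₁ r) = a • m₁ r + b • m₂ r)
    (hAm₂ : (A r).mulVec (m₂ r) = b • m₁ r + d • m₂ r) {B : ℝ × ℝ → Matrix (Fin 2) (Fin 2) ℝ}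
    (hB : ∀ᶠ p in 𝓝 r, B p = tildeA A (m₁ p) (m₂ p) p) :
    Jmat B r - Jmat (tildeA A (m₁ r) (m₂ r)) r =
      (let w e := m₁ r ⬝ᵥ fun i => fderiv ℝ (fun p => m₂ p i) r e
      !![-4 * b * w (1, 0), -4 * b * w (0, 1);
        2 * (a - d) * w (1, 0), 2 * (a - d) * w (0, 1)]) := by
  have orth {u v : ℝ × ℝ → Fin n → ℝ} (hu : ∀ i, DifferentiableAt ℝ (fun p => u p i) r)
      (hv : ∀ i, DifferentiableAt ℝ (fun p => v p i) r) {k : ℝ}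
      (h : ∀ᶠ p in 𝓝 r, u p ⬝ᵥ v p = k) (e : ℝ × ℝ) :
      (fun i => fderiv ℝ (fun p => u p i) r e) ⬝ᵥ v r +
        u r ⬝ᵥ (fun i => fderiv ℝ (fun p => v p i) r e) = 0 := by
    have h1 := (hasFDerivAt_dotProduct_mulVec (A := fun _ => 1) hu hv (by simp)).2 e
    have h2 : (fun p => u p ⬝ᵥ (1 : Matrix (Fin n) (Fin n) ℝ).mulVec (v p)) =ᶠ[𝓝 r]
        fun _ => k := by
      filter_upwards [h] with p hp
      simpa using hp
    rw [h2.fderiv_eq] at h1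
    have h3 : (Matrix.of fun i j : Fin n => (0 : ℝ)) = 0 := rfl
    simpa [h3] using h1.symm
  have frozen (u v : Fin n → ℝ) (e : ℝ × ℝ) :
      fderiv ℝ (fun p => u ⬝ᵥ (A p).mulVec v) r e =
        u ⬝ᵥ (Matrix.of fun i j => fderiv ℝ (fun p => A p i j) r e).mulVec v := by
    have := (hasFDerivAt_dotProduct_mulVec (u := fun _ => u) (v := fun _ => v)
      (by simp) (by simp) hA).2 e
    have h3 : (fun _ : Fin n => (0 : ℝ)) = 0 := rfl
    simpa [h3] using this
  have b₁₁ := hasFDerivAt_dotProduct_mulVec hm₁ hm₁ hA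
  have b₂₂ := hasFDerivAt_dotProduct_mulVec hm₂ hm₂ hA
  have b₁₂ := hasFDerivAt_dotProduct_mulVec hm₁ hm₂ hA
  have f (u v : Fin n → ℝ) : DifferentiableAt ℝ (fun p => u ⬝ᵥ (A p).mulVec v) r :=
    (hasFDerivAt_dotProduct_mulVec (u := fun _ => u) (v := fun _ => v) (by simp) (by simp) hA).1
  have eB₁ : (fun p => B p 0 0 - B p 1 1) =ᶠ[𝓝 r]
      fun p => m₁ p ⬝ᵥ (A p).mulVec (m₁ p) - m₂ p ⬝ᵥ (A p).mulVec (m₂ p) := by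
    filter_upwards [hB] with p hp
    simp [hp, tildeA]
  have eB₂ : (fun p => 2 * B p 0 1) =ᶠ[𝓝 r] fun p => 2 * (m₁ p ⬝ᵥ (A p).mulVec (m₂ p)) := by
    filter_upwards [hB] with p hp
    simp [hp, tildeA]
  have row₁ (e : ℝ × ℝ) : fderiv ℝ (fun p => B p 0 0 - B p 1 1) r e -
      fderiv ℝ (fun p => tildeA A (m₁ r) (m₂ r) p 0 0 - tildeA A (m₁ r) (m₂ r) p 1 1) r e =
      -4 * b * (m₁ r ⬝ᵥ fun i => fderiv ℝ (fun p => m₂ p i) r e) := by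
    have o₁₁ := orth hm₁ hm₁ h₁₁ e
    have o₂₂ := orth hm₂ hm₂ h₂₂ e
    have o₁₂ := orth hm₁ hm₂ h₁₂ e
    rw [eB₁.fderiv_eq, fderiv_fun_sub b₁₁.1 b₂₂.1]
    simp only [tildeA, of_apply, cons_val', cons_val_zero, cons_val_one, cons_val_fin_one]
    rw [fderiv_fun_sub (f _ _) (f _ _)]
    simp only [_root_.sub_apply, frozen, b₁₁.2, b₂₂.2,
      dotProduct_mulVec_symm hAsym _ (fun i => fderiv ℝ _ r e), hAm₁, hAm₂, dotProduct_add,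
      dotProduct_smul, smul_eq_mul, dotProduct_comm _ (m₁ r), dotProduct_comm _ (m₂ r)] at *
    linear_combination a * o₁₁ - d * o₂₂ + 2 * b * o₁₂
  have row₂ (e : ℝ × ℝ) : fderiv ℝ (fun p => 2 * B p 0 1) r e -
      fderiv ℝ (fun p => 2 * tildeA A (m₁ r) (m₂ r) p 0 1) r e =
      2 * (a - d) * (m₁ r ⬝ᵥ fun i => fderiv ℝ (fun p => m₂ p i) r e) := by
    have o₁₁ := orth hm₁ hm₁ h₁₁ e
    have o₂₂ := orth hm₂ hm₂ h₂₂ e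
    have o₁₂ := orth hm₁ hm₂ h₁₂ e
    rw [eB₂.fderiv_eq, fderiv_const_mul b₁₂.1]
    simp only [tildeA, of_apply, cons_val', cons_val_zero, cons_val_one, cons_val_fin_one]
    rw [fderiv_const_mul (f _ _)]
    simp only [_root_.smul_apply, frozen, b₁₂.2,
      dotProduct_mulVec_symm hAsym _ (fun i => fderiv ℝ _ r e), hAm₁, hAm₂, dotProduct_add,
      dotProduct_smul, smul_eq_mul, dotProduct_comm _ (m₁ r), dotProduct_comm _ (m₂ r)] at *
    linear_combination b * o₁₁ + b * o₂₂ + 2 * d * o₁₂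
  ext i j
  fin_cases i <;> fin_cases j
  · simpa [Jmat, pdx] using row₁ (1, 0)
  · simpa [Jmat, pdy] using row₁ (0, 1)
  · simpa [Jmat, pdx] using row₂ (1, 0)
  · simpa [Jmat, pdy] using row₂ (0, 1)

theorem abs_mul_apply_le {X Y : Matrix (Fin 2) (Fin 2) ℝ} {a b : ℝ}
    (hX : ∀ i j, |X i j| ≤ a) (hY : ∀ i j, |Y i j| ≤ b) (i j : Fin 2) :
    |(X * Y) i j| ≤ 2 * (a * b) := by
  have ha : 0 ≤ a := (abs_nonneg _).trans (hX 0 0)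
  rw [Matrix.mul_apply, Fin.sum_univ_two]
  refine (abs_add_le _ _).trans ?_
  rw [abs_mul, abs_mul]
  have h1 := mul_le_mul (hX i 0) (hY 0 j) (abs_nonneg _) ha
  have h2 := mul_le_mul (hX i 1) (hY 1 j) (abs_nonneg _) ha
  linarith

theorem eventually_inv_bounded {G : ℝ × ℝ → Matrix (Fin 2) (Fin 2) ℝ} {α : ℝ × ℝ}
    (hG : ∀ i j, ContinuousAt (fun r => G r i j) α) (hdet : (G α).det ≠ 0) :
    ∃ c > 0, ∀ᶠ r in 𝓝 α, (G r).det ≠ 0 ∧ ∀ i j, |(G r)⁻¹ i j| ≤ c := by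
  have hd : ContinuousAt (fun r => (G r).det) α := by
    simp only [det_fin_two]
    exact ((hG 0 0).mul (hG 1 1)).sub ((hG 0 1).mul (hG 1 0))
  have hinv (i j : Fin 2) : ContinuousAt (fun r => (G r)⁻¹ i j) α := by
    simp only [inv_def, Ring.inverse_eq_inv', Matrix.smul_apply, smul_eq_mul]
    refine (hd.inv₀ hdet).mul ?_
    simp only [adjugate_fin_two]
    fin_cases i <;> fin_cases j
    · simpa using hG 1 1
    · simpa only [Fin.zero_eta, Fin.mk_one, of_apply, cons_val', cons_val_zero, cons_val_one,
        cons_val_fin_one] using (hG 0 1).fun_neg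
    · simpa only [Fin.zero_eta, Fin.mk_one, of_apply, cons_val', cons_val_zero, cons_val_one,
        cons_val_fin_one] using (hG 1 0).fun_neg
    · simpa using hG 0 0
  refine ⟨∑ i, ∑ j, |(G α)⁻¹ i j| + 1, by positivity, ?_⟩
  have hb (i j : Fin 2) : ∀ᶠ r in 𝓝 α, |(G r)⁻¹ i j| ≤ ∑ i, ∑ j, |(G α)⁻¹ i j| + 1 := by
    refine ((hinv i j).abs.eventually_lt_const ?_).mono fun _ => le_of_lt
    have h1 := Finset.single_le_sum (f := fun j => |(G α)⁻¹ i j|) (fun _ _ => abs_nonneg _)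
      (Finset.mem_univ j)
    have h2 := Finset.single_le_sum (f := fun i => ∑ j, |(G α)⁻¹ i j|)
      (fun _ _ => Finset.sum_nonneg fun _ _ => abs_nonneg _) (Finset.mem_univ i)
    linarith
  exact (hd.eventually_ne hdet).and (eventually_all.2 fun i => eventually_all.2 fun j => hb i j)

theorem abs_inv_sub_inv_le {G K R R' : Matrix (Fin 2) (Fin 2) ℝ} {a b c g : ℝ}
    (hG : G.det ≠ 0) (hK : K.det ≠ 0) (hR : R * R' = 1) (ha : ∀ i j, |G⁻¹ i j| ≤ a)
    (hb : ∀ i j, |K⁻¹ i j| ≤ b) (hc : ∀ i j, |R' i j| ≤ c) (hg : ∀ i j, |(G - K) i j| ≤ g)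
    (i j : Fin 2) :
    |(R * G)⁻¹ i j - (R * K)⁻¹ i j| ≤ 8 * (a * g * b * c) := by
  have hG' := G.nonsing_inv_mul (isUnit_iff_ne_zero.2 hG)
  have hK' := K.mul_nonsing_inv (isUnit_iff_ne_zero.2 hK)
  have key : (R * G)⁻¹ - (R * K)⁻¹ = G⁻¹ * -(G - K) * K⁻¹ * R' := by
    rw [Matrix.mul_inv_rev, Matrix.mul_inv_rev, inv_eq_right_inv hR, ← sub_mul]
    congr 1
    rw [neg_sub, mul_sub, sub_mul, hG', mul_assoc, hK', mul_one, one_mul]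
  rw [← Matrix.sub_apply, key]
  have := abs_mul_apply_le (abs_mul_apply_le (abs_mul_apply_le ha
    (Y := -(G - K)) (b := g) fun i j => by
      rw [Matrix.neg_apply, abs_neg]; exact hg i j) hb) hc i j
  linarith

theorem contDiffAt_dotProduct_mulVec {n : ℕ} {u v : ℝ × ℝ → Fin n → ℝ}
    {A : ℝ × ℝ → Matrix (Fin n) (Fin n) ℝ} {r : ℝ × ℝ}
    (hu : ∀ i, ContDiffAt ℝ 2 (fun p => u p i) r) (hv : ∀ i, ContDiffAt ℝ 2 (fun p => v p i) r)
    (hA : ∀ i j, ContDiffAt ℝ 2 (fun p => A p i j) r) :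
    ContDiffAt ℝ 2 (fun p => u p ⬝ᵥ (A p).mulVec (v p)) r := by
  simp only [dotProduct, mulVec]
  exact ContDiffAt.sum fun i _ => (hu i).mul (ContDiffAt.sum fun j _ => (hA i j).mul (hv j))

theorem ContDiffAt.continuousAt_fderiv_apply {f : ℝ × ℝ → ℝ} {r : ℝ × ℝ}
    (hf : ContDiffAt ℝ 2 f r) (e : ℝ × ℝ) : ContinuousAt (fun p => fderiv ℝ f p e) r :=
  (hf.fderiv_right (m := 1) (by norm_num)).continuousAt.clm_apply continuousAt_const

theorem Jmat_continuousAt {S : ℝ × ℝ → Matrix (Fin 2) (Fin 2) ℝ} {r : ℝ × ℝ}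
    (hS : ∀ i j, ContDiffAt ℝ 2 (fun p => S p i j) r) (i j : Fin 2) :
    ContinuousAt (fun p => Jmat S p i j) r := by
  have h1 := ((hS 0 0).sub (hS 1 1)).continuousAt_fderiv_apply
  have h2 := (contDiffAt_const.mul (hS 0 1) :
    ContDiffAt ℝ 2 (fun p => 2 * S p 0 1) r).continuousAt_fderiv_apply
  fin_cases i <;> fin_cases j
  · exact h1 (1, 0)
  · exact h1 (0, 1)
  · exact h2 (1, 0)
  · exact h2 (0, 1)

/-- The entries of a symmetric `2 × 2` matrix are controlled by its eigenvalue gap. -/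
theorem abs_le_gap {a b d l₁ l₂ : ℝ} (htr : a + d = l₁ + l₂) (hdet : a * d - b * b = l₁ * l₂) :
    |a - d| ≤ |l₂ - l₁| ∧ |2 * b| ≤ |l₂ - l₁| := by
  have h : (a - d) ^ 2 + (2 * b) ^ 2 = (l₂ - l₁) ^ 2 := by
    linear_combination (a + d + l₁ + l₂) * htr - 4 * hdet
  exact ⟨sq_le_sq.mp (by nlinarith [sq_nonneg (2 * b)]),
    sq_le_sq.mp (by nlinarith [sq_nonneg (a - d)])⟩

/-- A block-diagonalizing orthogonal matrix maps its first columns to combinations of the first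
two columns. -/
theorem mulVec_col_of_block {n : ℕ} (hn : 2 < n) {A M : Matrix (Fin n) (Fin n) ℝ}
    (hM : Mᵀ * M = 1)
    (hoff : ∀ i j : Fin n, (i.val < 2 ∧ 2 ≤ j.val) ∨ (2 ≤ i.val ∧ j.val < 2) →
      (Mᵀ * A * M) i j = 0) (j : Fin n) (hj : j.val < 2) :
    A.mulVec (M.col j) = (Mᵀ * A * M) ⟨0, by omega⟩ j • M.col ⟨0, by omega⟩ +
      (Mᵀ * A * M) ⟨1, by omega⟩ j • M.col ⟨1, by omega⟩ := by
  have h : A * M = M * (Mᵀ * A * M) := by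
    rw [← mul_assoc, ← mul_assoc, mul_eq_one_comm.mp hM, one_mul]
  funext i
  have hi : (A.mulVec (M.col j)) i = (A * M) i j := rfl
  rw [hi, h, Matrix.mul_apply,
    Fintype.sum_eq_add (⟨0, by omega⟩ : Fin n) ⟨1, by omega⟩ (by simp)]
  · simp [mul_comm]
  · rintro x ⟨hx0, hx1⟩
    simp only [ne_eq, Fin.ext_iff] at hx0 hx1
    rw [hoff x j (Or.inr ⟨by omega, hj⟩), mul_zero]

/-- key estimate in the proof of Lemma 5 of the paper: near a
non-degenerate conical point, the inverse Jacobians computed from the block `B^r`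
(the smooth block `B` rotated by a constant orthogonal `W` so as to be diagonal at
`r`, aligned with the eigenvectors `v₁, v₂` at `r`) and from `Ã^r` are both defined
and differ by `O(|λ₂(r) − λ₁(r)|)`. -/
theorem stmt7 {n : ℕ} (hn : 2 < n)
    (A : ℝ × ℝ → Matrix (Fin n) (Fin n) ℝ)
    (hA : ∀ i j, ContDiff ℝ 2 fun r => A r i j)
    (hAsym : ∀ r, (A r)ᵀ = A r)
    (lam : ℝ × ℝ → Fin n → ℝ)
    (hmono : ∀ r, Monotone (lam r))
    (heig : ∀ r, ∃ V : Matrix (Fin n) (Fin n) ℝ,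
      Vᵀ * V = 1 ∧ A r = V * diagonal (lam r) * Vᵀ)
    (α : ℝ × ℝ)
    (hdeg : lam α ⟨0, by omega⟩ = lam α ⟨1, by omega⟩)
    (hgap : lam α ⟨1, by omega⟩ < lam α ⟨2, by omega⟩)
    -- non-degeneracy of the conical point, via an orthonormal eigenpair at `α`
    (w₁ w₂ : Fin n → ℝ)
    (hw₁ : (A α).mulVec w₁ = lam α ⟨0, by omega⟩ • w₁)
    (hw₂ : (A α).mulVec w₂ = lam α ⟨1, by omega⟩ • w₂)
    (hw₁n : w₁ ⬝ᵥ w₁ = 1) (hw₂n : w₂ ⬝ᵥ w₂ = 1) (hw₁₂ : w₁ ⬝ᵥ w₂ = 0)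
    (hJα : (Jmat (tildeA A w₁ w₂) α).det ≠ 0)
    -- the smooth orthogonal block diagonalization near `α`
    (Ω₀ : Set (ℝ × ℝ)) (hΩ₀ : IsOpen Ω₀) (hαΩ₀ : α ∈ Ω₀)
    (M : ℝ × ℝ → Matrix (Fin n) (Fin n) ℝ)
    (hM : ∀ i j, ContDiffOn ℝ 2 (fun r => M r i j) Ω₀)
    (hMorth : ∀ r ∈ Ω₀, (M r)ᵀ * M r = 1)
    (B : ℝ × ℝ → Matrix (Fin 2) (Fin 2) ℝ)
    (hblock : ∀ r ∈ Ω₀, ∀ i j : Fin 2,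
      ((M r)ᵀ * A r * M r) ⟨i.val, by have := i.isLt; omega⟩ ⟨j.val, by have := j.isLt; omega⟩
        = B r i j)
    (hoff : ∀ r ∈ Ω₀, ∀ i j : Fin n,
      (i.val < 2 ∧ 2 ≤ j.val) ∨ (2 ≤ i.val ∧ j.val < 2) → ((M r)ᵀ * A r * M r) i j = 0)
    (hBeig : ∀ r ∈ Ω₀, B r 0 0 + B r 1 1 = lam r ⟨0, by omega⟩ + lam r ⟨1, by omega⟩ ∧
      (B r).det = lam r ⟨0, by omega⟩ * lam r ⟨1, by omega⟩) :
    ∃ Ω ⊆ Ω₀, IsOpen Ω ∧ α ∈ Ω ∧ ∃ c > 0, ∀ r ∈ Ω,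
      ∀ v₁ v₂ : Fin n → ℝ,
        (A r).mulVec v₁ = lam r ⟨0, by omega⟩ • v₁ →
        (A r).mulVec v₂ = lam r ⟨1, by omega⟩ • v₂ →
        v₁ ⬝ᵥ v₁ = 1 → v₂ ⬝ᵥ v₂ = 1 → v₁ ⬝ᵥ v₂ = 0 →
        ∀ W : Matrix (Fin 2) (Fin 2) ℝ, Wᵀ * W = 1 →
          -- `W` aligns the first two columns of `M(r)` with `v₁, v₂`
          (∀ i : Fin n,
            (∑ k : Fin 2, M r i ⟨k.val, by have := k.isLt; omega⟩ * W k 0) = v₁ i) →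
          (∀ i : Fin n,
            (∑ k : Fin 2, M r i ⟨k.val, by have := k.isLt; omega⟩ * W k 1) = v₂ i) →
          -- so that `B^r := Wᵀ B W` is diagonal at `r`
          Wᵀ * B r * W = !![lam r ⟨0, by omega⟩, 0; 0, lam r ⟨1, by omega⟩] →
          (Jmat (fun p => Wᵀ * B p * W) r).det ≠ 0 ∧
          (Jmat (tildeA A v₁ v₂) r).det ≠ 0 ∧
          ∀ i j : Fin 2,
            |(Jmat (fun p => Wᵀ * B p * W) r)⁻¹ i j - (Jmat (tildeA A v₁ v₂) r)⁻¹ i j|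
              ≤ c * |lam r ⟨1, by omega⟩ - lam r ⟨0, by omega⟩| := by
  set m₁ : ℝ × ℝ → Fin n → ℝ := fun p => (M p).col ⟨0, by omega⟩ with hm₁
  set m₂ : ℝ × ℝ → Fin n → ℝ := fun p => (M p).col ⟨1, by omega⟩ with hm₂
  have hAat (r : ℝ × ℝ) (i j : Fin n) : ContDiffAt ℝ 2 (fun p => A p i j) r := (hA i j).contDiffAt
  have hAd (r : ℝ × ℝ) (i j : Fin n) : DifferentiableAt ℝ (fun p => A p i j) r :=
    (hAat r i j).differentiableAt (by norm_num)
  have hMat {r : ℝ × ℝ} (hr : r ∈ Ω₀) (i j : Fin n) : ContDiffAt ℝ 2 (fun p => M p i j) r :=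
    (hM i j).contDiffAt (hΩ₀.mem_nhds hr)
  have hMd {r : ℝ × ℝ} (hr : r ∈ Ω₀) (i j : Fin n) : DifferentiableAt ℝ (fun p => M p i j) r :=
    (hMat hr i j).differentiableAt (by norm_num)
  have hcol {r : ℝ × ℝ} (hr : r ∈ Ω₀) (i j : Fin n) :
      (M r).col i ⬝ᵥ (M r).col j = (1 : Matrix (Fin n) (Fin n) ℝ) i j := by
    rw [← hMorth r hr]; rfl
  have h₁₁ {r : ℝ × ℝ} (hr : r ∈ Ω₀) : m₁ r ⬝ᵥ m₁ r = 1 := by simp [hm₁, hcol hr]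
  have h₂₂ {r : ℝ × ℝ} (hr : r ∈ Ω₀) : m₂ r ⬝ᵥ m₂ r = 1 := by simp [hm₂, hcol hr]
  have h₁₂ {r : ℝ × ℝ} (hr : r ∈ Ω₀) : m₁ r ⬝ᵥ m₂ r = 0 := by simp [hm₁, hm₂, hcol hr]
  have hnhds {r : ℝ × ℝ} (hr : r ∈ Ω₀) : ∀ᶠ p in 𝓝 r, p ∈ Ω₀ := hΩ₀.mem_nhds hr
  have hB {r : ℝ × ℝ} (hr : r ∈ Ω₀) : B r = tildeA A (m₁ r) (m₂ r) r := by
    have hC (i j : Fin n) :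
        ((M r)ᵀ * A r * M r) i j = (M r).col i ⬝ᵥ (A r).mulVec ((M r).col j) := by
      rw [mul_assoc]; rfl
    ext i j
    rw [← hblock r hr i j, hC]
    fin_cases i <;> fin_cases j <;> rfl
  have hBsym {r : ℝ × ℝ} (hr : r ∈ Ω₀) : B r 1 0 = B r 0 1 := by
    rw [hB hr]
    exact dotProduct_mulVec_symm (hAsym r) _ _
  have hBat {r : ℝ × ℝ} (hr : r ∈ Ω₀) (i j : Fin 2) : ContDiffAt ℝ 2 (fun p => B p i j) r := by
    have e : (fun p => B p i j) =ᶠ[𝓝 r] fun p => tildeA A (m₁ p) (m₂ p) p i j := by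
      filter_upwards [hnhds hr] with p hp
      rw [hB hp]
    refine ContDiffAt.congr_of_eventuallyEq ?_ e
    fin_cases i <;> fin_cases j <;>
      exact contDiffAt_dotProduct_mulVec (hMat hr · _) (hMat hr · _) (hAat r)
  have hAm₁ {r : ℝ × ℝ} (hr : r ∈ Ω₀) :
      (A r).mulVec (m₁ r) = B r 0 0 • m₁ r + B r 0 1 • m₂ r := by
    rw [← hBsym hr, ← hblock r hr 0 0, ← hblock r hr 1 0]
    exact mulVec_col_of_block hn (hMorth r hr) (hoff r hr) _ (by simp)
  have hAm₂ {r : ℝ × ℝ} (hr : r ∈ Ω₀) :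
      (A r).mulVec (m₂ r) = B r 0 1 • m₁ r + B r 1 1 • m₂ r := by
    rw [← hblock r hr 0 1, ← hblock r hr 1 1]
    exact mulVec_col_of_block hn (hMorth r hr) (hoff r hr) _ (by simp)
  set w : ℝ × ℝ → ℝ × ℝ → ℝ := fun e r => m₁ r ⬝ᵥ fun i => fderiv ℝ (fun p => m₂ p i) r e with hw
  have hdiff {r : ℝ × ℝ} (hr : r ∈ Ω₀) : Jmat B r - Jmat (tildeA A (m₁ r) (m₂ r)) r =
      !![-4 * B r 0 1 * w (1, 0) r, -4 * B r 0 1 * w (0, 1) r;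
        2 * (B r 0 0 - B r 1 1) * w (1, 0) r, 2 * (B r 0 0 - B r 1 1) * w (0, 1) r] :=
    fderiv_block_sub_fderiv_frozen (hAd r) (hAsym r) (hMd hr · _) (hMd hr · _)
      ((hnhds hr).mono fun _ => h₁₁) ((hnhds hr).mono fun _ => h₂₂)
      ((hnhds hr).mono fun _ => h₁₂) (hAm₁ hr) (hAm₂ hr) ((hnhds hr).mono fun _ => hB)
  have hwc (e : ℝ × ℝ) : ContinuousAt (w e) α :=
    tendsto_finsetSum _ fun i _ =>
      (hMat hαΩ₀ i _).continuousAt.mul ((hMat hαΩ₀ i _).continuousAt_fderiv_apply e)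
  have hBc (i j : Fin 2) : ContinuousAt (fun p => B p i j) α := (hBat hαΩ₀ i j).continuousAt
  have hGc := Jmat_continuousAt (hBat hαΩ₀)
  have hKc (i j : Fin 2) :
      ContinuousAt (fun r => Jmat (tildeA A (m₁ r) (m₂ r)) r i j) α := by
    have e : (fun r => Jmat (tildeA A (m₁ r) (m₂ r)) r i j) =ᶠ[𝓝 α] fun r => Jmat B r i j -
        !![-4 * B r 0 1 * w (1, 0) r, -4 * B r 0 1 * w (0, 1) r;
          2 * (B r 0 0 - B r 1 1) * w (1, 0) r, 2 * (B r 0 0 - B r 1 1) * w (0, 1) r] i j := by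
      filter_upwards [hnhds hαΩ₀] with r hr
      rw [← hdiff hr, Matrix.sub_apply, sub_sub_cancel]
    refine ContinuousAt.congr ((hGc i j).sub ?_) e.symm
    have c₁ (e : ℝ × ℝ) : ContinuousAt (fun r => -4 * B r 0 1 * w e r) α :=
      (continuousAt_const.mul (hBc 0 1)).mul (hwc e)
    have c₂ (e : ℝ × ℝ) : ContinuousAt (fun r => 2 * (B r 0 0 - B r 1 1) * w e r) α :=
      (continuousAt_const.mul ((hBc 0 0).sub (hBc 1 1))).mul (hwc e)
    fin_cases i <;> fin_cases j
    · exact c₁ (1, 0)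
    · exact c₁ (0, 1)
    · exact c₂ (1, 0)
    · exact c₂ (0, 1)
  have hgapB {r : ℝ × ℝ} (hr : r ∈ Ω₀) := abs_le_gap (hBeig r hr).1 (by
    rw [← (hBeig r hr).2, det_fin_two, hBsym hr] :
      B r 0 0 * B r 1 1 - B r 0 1 * B r 0 1 = lam r ⟨0, by omega⟩ * lam r ⟨1, by omega⟩)
  obtain ⟨hα₁, hα₂⟩ := hgapB hαΩ₀
  rw [hdeg, sub_self, abs_zero, abs_nonpos_iff] at hα₁ hα₂
  have hb : B α 0 1 = 0 := by linarith
  have ha : B α 0 0 = lam α ⟨0, by omega⟩ := by linarith [(hBeig α hαΩ₀).1]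
  have hd : B α 1 1 = lam α ⟨0, by omega⟩ := by linarith
  have hKα : (Jmat (tildeA A (m₁ α) (m₂ α)) α).det ≠ 0 := by
    obtain ⟨V, hV, hAV⟩ := heig α
    have e₁ := Jmat_tildeA_det_sq hn (hAd α) hAsym (hmono α) hV hAV hdeg hgap hw₁
      (by rw [hw₂, hdeg]) hw₁n hw₂n hw₁₂
    have e₂ := Jmat_tildeA_det_sq hn (hAd α) hAsym (hmono α) hV hAV hdeg hgap
      (by rw [hAm₁ hαΩ₀, hb, ha, zero_smul, add_zero])
      (by rw [hAm₂ hαΩ₀, hb, hd, zero_smul, zero_add]) (h₁₁ hαΩ₀) (h₂₂ hαΩ₀) (h₁₂ hαΩ₀)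
    rw [← pow_ne_zero_iff two_ne_zero, e₂, ← e₁]
    exact pow_ne_zero 2 hJα
  have hGα : (Jmat B α).det ≠ 0 := by
    have : Jmat B α = Jmat (tildeA A (m₁ α) (m₂ α)) α := by
      rw [← sub_eq_zero, hdiff hαΩ₀, hb, hα₁]
      ext i j
      fin_cases i <;> fin_cases j <;> simp
    rwa [this]
  obtain ⟨cG, hcG, hG⟩ := eventually_inv_bounded hGc hGα
  obtain ⟨cK, hcK, hK⟩ := eventually_inv_bounded hKc hKα
  have hwb (e : ℝ × ℝ) : ∀ᶠ r in 𝓝 α, |w e r| < |w e α| + 1 :=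
    (hwc e).abs.eventually_lt_const (by linarith)
  set cw := |w (1, 0) α| + |w (0, 1) α| + 1 with hcw
  have hcw0 : 0 < cw := by positivity
  obtain ⟨Ω, hΩ, hΩo, hαΩ⟩ := eventually_nhds_iff.1
    ((hnhds hαΩ₀).and (hG.and (hK.and ((hwb (1, 0)).and (hwb (0, 1))))))
  refine ⟨Ω, fun r hr => (hΩ r hr).1, hΩo, hαΩ, 8 * (cG * (2 * cw) * cK * 2), by positivity, ?_⟩
  intro r hr v₁ v₂ _ _ _ _ _ W hW hv₁ hv₂ _
  obtain ⟨hrΩ, ⟨hGd, hGb⟩, ⟨hKd, hKb⟩, hw10, hw01⟩ := hΩ r hr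
  have ev₁ : v₁ = W 0 0 • m₁ r + W 1 0 • m₂ r := by
    funext i
    rw [← hv₁ i]
    simp [Fin.sum_univ_two, hm₁, hm₂, mul_comm]
  have ev₂ : v₂ = W 0 1 • m₁ r + W 1 1 • m₂ r := by
    funext i
    rw [← hv₂ i]
    simp [Fin.sum_univ_two, hm₁, hm₂, mul_comm]
  rw [ev₁, ev₂, Jmat_tildeA_combination (hAd r) hAsym _ _ hW,
    Jmat_conj hW (fun i j => (hBat hrΩ i j).differentiableAt (by norm_num))
      ((hnhds hrΩ).mono fun _ => hBsym)]
  have hRd : (conjAct W).det ≠ 0 := fun h => by simpa [h] using conjAct_det_sq hW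
  refine ⟨by rw [det_mul]; exact mul_ne_zero hRd hGd, by rw [det_mul]; exact mul_ne_zero hRd hKd,
    fun i j => ?_⟩
  obtain ⟨hg₁, hg₂⟩ := hgapB hrΩ
  have hE : ∀ i j, |(Jmat B r - Jmat (tildeA A (m₁ r) (m₂ r)) r) i j| ≤
      2 * cw * |lam r ⟨1, by omega⟩ - lam r ⟨0, by omega⟩| := by
    have bound {x y : ℝ} (hx : |x| ≤ |lam r ⟨1, by omega⟩ - lam r ⟨0, by omega⟩|)
        (hy : |y| ≤ cw) : |2 * x * y| ≤ 2 * cw * |lam r ⟨1, by omega⟩ - lam r ⟨0, by omega⟩| := by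
      rw [abs_mul, abs_mul, abs_two]
      nlinarith [mul_le_mul hx hy (abs_nonneg _) (abs_nonneg _)]
    have hy₁ : |w (1, 0) r| ≤ cw := by linarith [abs_nonneg (w (0, 1) α)]
    have hy₂ : |w (0, 1) r| ≤ cw := by linarith [abs_nonneg (w (1, 0) α)]
    have hneg : |-(2 * B r 0 1)| ≤ |lam r ⟨1, by omega⟩ - lam r ⟨0, by omega⟩| := by
      rwa [abs_neg]
    have h4 : -4 * B r 0 1 = 2 * -(2 * B r 0 1) := by ring
    rw [hdiff hrΩ, h4]
    intro i j
    fin_cases i <;> fin_cases j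
    · exact bound hneg hy₁
    · exact bound hneg hy₂
    · exact bound hg₁ hy₁
    · exact bound hg₁ hy₂
  have hWt : Wᵀᵀ * Wᵀ = 1 := by simpa using mul_eq_one_comm.mp hW
  refine (abs_inv_sub_inv_le hGd hKd (conjAct_transpose_mul hW) hGb hKb (abs_conjAct_le hWt) hE
    i j).trans (le_of_eq ?_)
  ring
end
end
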